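/- Let 0 ≤ q < 1 and let Ω ∈ U_q(s_p, M_p) be a p×p matrix with inverse Σ = Ω^{-1}. Let Σ̂ ∈ ℝ^{p×p} be a symmetric matrix and let λ ≥ 0 satisfy λ ≥ 3‖Ω‖_{L1}‖Σ̂ − Σ‖_∞ and ‖Ω‖_{L1}^{−q} λ^{1−q} s_p ≤ 1/2. Let Ω̂ = (β̂_1,…,β̂_p) where, for each i, β̂_i is a SCIO column estimator (a global minimizer of β ↦ (1/2)βᵀΣ̂β − e_iᵀβ + λ|β|_1), and let Ω̃ be the symmetrization of Ω̂. Then ‖Ω̃ − Ω‖_{L1} ≤ 66 (λ ‖Ω‖_{L1})^{1−q} s_p. -/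

import Mathlib

open Matrix
open scoped BigOperators

/-- The ℓ1 norm of a vector in ℝ^p. -/
noncomputable def vecL1 {p : ℕ} (a : Fin p → ℝ) : ℝ := ∑ i, |a i|

/-- The entrywise supremum norm of a p×p matrix. -/
noncomputable def matLinf {p : ℕ} (A : Matrix (Fin p) (Fin p) ℝ) : ℝ := ⨆ i, ⨆ j, |A i j|

/-- The maximum absolute column-sum norm of a p×p matrix. -/
noncomputable def matL1 {p : ℕ} (A : Matrix (Fin p) (Fin p) ℝ) : ℝ := ⨆ j, ∑ i, |A i j|

/-- The SCIO objective function β ↦ (1/2)βᵀ Σ̂ β − eᵀβ + λ|β|₁. -/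
noncomputable def scioObj {p : ℕ} (S : Matrix (Fin p) (Fin p) ℝ) (e : Fin p → ℝ)
    (lam : ℝ) (β : Fin p → ℝ) : ℝ :=
  (1 / 2) * (β ⬝ᵥ S.mulVec β) - e ⬝ᵥ β + lam * vecL1 β

/-- Symmetrization of a matrix: ω̃_ij = β̂_ij if |β̂_ij| ≤ |β̂_ji|, and β̂_ji otherwise. -/
noncomputable def symmetrize {p : ℕ} (A : Matrix (Fin p) (Fin p) ℝ) : Matrix (Fin p) (Fin p) ℝ :=
  fun i j => if |A i j| ≤ |A j i| then A i j else A j i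

/-!
Write `w` for a column of `Ω`, `b` for its estimate, `L = ‖Ω‖_{L1}` and `t = λ L`. Optimality of `b`
gives `|Σ̂ b - e|_∞ ≤ λ`, while `|Σ̂ w - e|_∞ ≤ λ / 3` because `Σ w = e`; applying `Ω` to
`Σ (b - w)` bounds the entries of `b - w` by a multiple of `t`, up to a small multiple of
`λ |b - w|₁`. Optimality also puts `b - w` in a cone: its `ℓ¹` norm is controlled by its mass on
`J = {k : |w k| ≥ t}` together with the mass of `w` off `J`. Weak sparsity bounds both `|J| t` and
the mass of `w` off `J` by `t ^ (1 - q) s`, so the `ℓ¹` error closes on itself. The symmetrized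
estimate satisfies the same entrywise bound, used on `J`, and has entries no larger than the
unsymmetrized ones, used off `J`.
-/

theorem nonneg_zero_of_continuous_of_forall_Ioc {f : ℝ → ℝ} (hf : Continuous f)
    (h : ∀ t ∈ Set.Ioc (0 : ℝ) 1, 0 ≤ f t) : 0 ≤ f 0 := by
  refine ge_of_tendsto ((hf.tendsto 0).mono_left (nhdsWithin_le_nhds (s := Set.Ioi 0))) ?_
  filter_upwards [Ioc_mem_nhdsGT one_pos] with t ht using h t ht

section Norms

variable {p : ℕ}

theorem vecL1_nonneg (v : Fin p → ℝ) : 0 ≤ vecL1 v :=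
  Finset.sum_nonneg fun _ _ => abs_nonneg _

theorem vecL1_add_le (v w : Fin p → ℝ) : vecL1 (v + w) ≤ vecL1 v + vecL1 w := by
  unfold vecL1
  rw [← Finset.sum_add_distrib]
  exact Finset.sum_le_sum fun i _ => abs_add_le _ _

theorem vecL1_smul (c : ℝ) (v : Fin p → ℝ) : vecL1 (c • v) = |c| * vecL1 v := by
  simp [vecL1, abs_mul, Finset.mul_sum]

theorem vecL1_single (k : Fin p) (c : ℝ) : vecL1 (Pi.single k c) = |c| := by
  simp [vecL1, Pi.single_apply, apply_ite abs]

theorem vecL1_add_smul_sub_le (v w : Fin p → ℝ) {t : ℝ} (ht0 : 0 ≤ t) (ht1 : t ≤ 1) :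
    vecL1 (v + t • (w - v)) ≤ vecL1 v + t * (vecL1 w - vecL1 v) := by
  calc vecL1 (v + t • (w - v)) = vecL1 ((1 - t) • v + t • w) := by congr 1; module
    _ ≤ vecL1 ((1 - t) • v) + vecL1 (t • w) := vecL1_add_le _ _
    _ = vecL1 v + t * (vecL1 w - vecL1 v) := by
        rw [vecL1_smul, vecL1_smul, abs_of_nonneg ht0, abs_of_nonneg (sub_nonneg.mpr ht1)]
        ring

theorem abs_dotProduct_le_mul_vecL1 (v : Fin p → ℝ) {w : Fin p → ℝ} {c : ℝ}
    (hw : ∀ i, |w i| ≤ c) : |v ⬝ᵥ w| ≤ c * vecL1 v := by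
  unfold vecL1 dotProduct
  rw [Finset.mul_sum]
  refine (Finset.abs_sum_le_sum_abs _ _).trans (Finset.sum_le_sum fun i _ => ?_)
  rw [abs_mul, mul_comm]
  exact mul_le_mul_of_nonneg_right (hw i) (abs_nonneg _)

theorem vecL1_col_le_matL1 (A : Matrix (Fin p) (Fin p) ℝ) (j : Fin p) :
    vecL1 (A.col j) ≤ matL1 A :=
  le_ciSup (f := fun j => vecL1 (A.col j)) (Set.finite_range _).bddAbove j

theorem matL1_le {A : Matrix (Fin p) (Fin p) ℝ} {c : ℝ} (hc : 0 ≤ c)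
    (h : ∀ j, vecL1 (A.col j) ≤ c) : matL1 A ≤ c :=
  Real.iSup_le h hc

theorem matL1_nonneg (A : Matrix (Fin p) (Fin p) ℝ) : 0 ≤ matL1 A :=
  Real.iSup_nonneg fun j => vecL1_nonneg (A.col j)

theorem matL1_pos {A : Matrix (Fin p) (Fin p) ℝ} (hA : A ≠ 0) : 0 < matL1 A := by
  obtain ⟨i, j, hij⟩ : ∃ i j, A i j ≠ 0 := by
    by_contra! h
    exact hA (Matrix.ext h)
  calc 0 < |A i j| := abs_pos.mpr hij
    _ ≤ vecL1 (A.col j) :=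
        Finset.single_le_sum (f := fun i => |A i j|) (fun _ _ => abs_nonneg _) (Finset.mem_univ i)
    _ ≤ matL1 A := vecL1_col_le_matL1 A j

theorem abs_le_matLinf (A : Matrix (Fin p) (Fin p) ℝ) (i j : Fin p) : |A i j| ≤ matLinf A :=
  (le_ciSup (f := fun j => |A i j|) (Set.finite_range _).bddAbove j).trans
    (le_ciSup (f := fun i => ⨆ j, |A i j|) (Set.finite_range _).bddAbove i)

theorem matLinf_nonneg (A : Matrix (Fin p) (Fin p) ℝ) : 0 ≤ matLinf A :=
  Real.iSup_nonneg fun _ => Real.iSup_nonneg fun _ => abs_nonneg _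

theorem abs_mulVec_le_matLinf_mul_vecL1 (A : Matrix (Fin p) (Fin p) ℝ) (v : Fin p → ℝ)
    (i : Fin p) : |(A *ᵥ v) i| ≤ matLinf A * vecL1 v := by
  rw [mulVec, dotProduct_comm]
  exact abs_dotProduct_le_mul_vecL1 v (abs_le_matLinf A i)

theorem abs_mulVec_le_matL1_mul_of_isSymm {A : Matrix (Fin p) (Fin p) ℝ} (hA : A.IsSymm)
    {v : Fin p → ℝ} {c : ℝ} (hv : ∀ i, |v i| ≤ c) (i : Fin p) :
    |(A *ᵥ v) i| ≤ matL1 A * c := by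
  have hc : 0 ≤ c := (abs_nonneg _).trans (hv i)
  have hrow : A i = A.col i := funext fun j => (hA.apply j i)
  calc |(A *ᵥ v) i| ≤ c * vecL1 (A i) := abs_dotProduct_le_mul_vecL1 (A i) hv
    _ ≤ c * matL1 A := by rw [hrow]; gcongr; exact vecL1_col_le_matL1 A i
    _ = matL1 A * c := mul_comm _ _

end Norms

/-- A SCIO estimator with input matrix `S`, linear term `e` and penalty level `lam`: a global
minimizer of the SCIO objective. The SCIO column estimators are the case of a basis vector `e`. -/
def IsScioEstimator {p : ℕ} (S : Matrix (Fin p) (Fin p) ℝ) (e : Fin p → ℝ) (lam : ℝ)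
    (b : Fin p → ℝ) : Prop :=
  ∀ β, scioObj S e lam b ≤ scioObj S e lam β

section Minimizer

variable {p : ℕ} {S : Matrix (Fin p) (Fin p) ℝ} {e b : Fin p → ℝ} {lam : ℝ}

theorem scioObj_add (hS : S.IsSymm) (e : Fin p → ℝ) (lam : ℝ) (b v : Fin p → ℝ) :
    scioObj S e lam (b + v) = scioObj S e lam b + v ⬝ᵥ (S *ᵥ b - e) + 1 / 2 * (v ⬝ᵥ S *ᵥ v)
      + lam * (vecL1 (b + v) - vecL1 b) := by
  have hcross : b ⬝ᵥ S *ᵥ v = v ⬝ᵥ S *ᵥ b := by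
    rw [dotProduct_mulVec, ← mulVec_transpose, hS.eq, dotProduct_comm]
  simp only [scioObj, mulVec_add, add_dotProduct, dotProduct_add, dotProduct_sub, hcross,
    dotProduct_comm v e]
  ring

theorem scioObj_smul (S : Matrix (Fin p) (Fin p) ℝ) (e : Fin p → ℝ) (lam c : ℝ)
    (v : Fin p → ℝ) :
    scioObj S e lam (c • v) =
      c ^ 2 / 2 * (v ⬝ᵥ S *ᵥ v) - c * (e ⬝ᵥ v) + |c| * (lam * vecL1 v) := by
  simp only [scioObj, vecL1_smul, mulVec_smul, smul_dotProduct, dotProduct_smul, smul_eq_mul]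
  ring

/-- Otherwise the objective would tend to `-∞` along the ray spanned by `v`. -/
theorem IsScioEstimator.dotProduct_mulVec_self_nonneg (hb : IsScioEstimator S e lam b)
    (v : Fin p → ℝ) : 0 ≤ v ⬝ᵥ S *ᵥ v := by
  have hlim := nonneg_zero_of_continuous_of_forall_Ioc
    (f := fun t => 1 / 2 * (v ⬝ᵥ S *ᵥ v) + t * (lam * vecL1 v - e ⬝ᵥ v)
      - t ^ 2 * scioObj S e lam b) (by fun_prop) fun t ⟨ht, _⟩ => by
    have hscaled := mul_le_mul_of_nonneg_left (hb (t⁻¹ • v)) (sq_nonneg t)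
    rw [scioObj_smul, abs_of_pos (inv_pos.mpr ht)] at hscaled
    field_simp at hscaled
    linarith
  simpa using hlim

/-- The first-order condition, obtained by moving from `b` towards `w`. -/
theorem IsScioEstimator.sub_dotProduct_gradient_le (hb : IsScioEstimator S e lam b)
    (hS : S.IsSymm) (hlam : 0 ≤ lam) (w : Fin p → ℝ) :
    (b - w) ⬝ᵥ (S *ᵥ b - e) ≤ lam * (vecL1 w - vecL1 b) := by
  have hlim := nonneg_zero_of_continuous_of_forall_Ioc
    (f := fun t => (w - b) ⬝ᵥ (S *ᵥ b - e) + lam * (vecL1 w - vecL1 b)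
      + t * (1 / 2 * ((w - b) ⬝ᵥ S *ᵥ (w - b)))) (by fun_prop) fun t ⟨ht, ht1⟩ => by
    have hmin := hb (b + t • (w - b))
    have hconv := mul_le_mul_of_nonneg_left (vecL1_add_smul_sub_le b w ht.le ht1) hlam
    simp only [scioObj_add hS, mulVec_smul, smul_dotProduct, dotProduct_smul, smul_eq_mul] at hmin
    refine nonneg_of_mul_nonneg_right ?_ ht
    linarith
  rw [← neg_sub w b, neg_dotProduct]
  linarith

theorem IsScioEstimator.abs_gradient_le (hb : IsScioEstimator S e lam b) (hS : S.IsSymm)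
    (hlam : 0 ≤ lam) (k : Fin p) : |(S *ᵥ b - e) k| ≤ lam := by
  have hstep (c : ℝ) : -(c * (S *ᵥ b - e) k) ≤ lam * |c| := by
    have hfirst := hb.sub_dotProduct_gradient_le hS hlam (b + (Pi.single k c : Fin p → ℝ))
    rw [sub_add_cancel_left, neg_dotProduct, single_dotProduct] at hfirst
    refine hfirst.trans (mul_le_mul_of_nonneg_left ?_ hlam)
    rw [sub_le_iff_le_add', ← vecL1_single k c]
    exact vecL1_add_le _ _
  have hneg := hstep 1
  have hpos := hstep (-1)
  rw [abs_neg] at hpos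
  rw [abs_one] at hneg hpos
  exact abs_le.mpr ⟨by linarith, by linarith⟩

theorem IsScioEstimator.mul_vecL1_sub_vecL1_le (hb : IsScioEstimator S e lam b) (hS : S.IsSymm)
    (hlam : 0 ≤ lam) {w : Fin p → ℝ} {c : ℝ} (hw : ∀ k, |(S *ᵥ w - e) k| ≤ c) :
    lam * (vecL1 b - vecL1 w) ≤ c * vecL1 (b - w) := by
  have hsplit : S *ᵥ (b - w) = (S *ᵥ b - e) - (S *ᵥ w - e) := by
    rw [mulVec_sub]; abel
  have hquad := hb.dotProduct_mulVec_self_nonneg (b - w)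
  rw [hsplit, dotProduct_sub] at hquad
  have hfirst := hb.sub_dotProduct_gradient_le hS hlam w
  have hdual := neg_le_of_abs_le (abs_dotProduct_le_mul_vecL1 (b - w) hw)
  linarith

end Minimizer

section Threshold

theorem rpow_one_sub_mul_rpow_self {q x : ℝ} (hq0 : 0 ≤ q) (hq1 : q ≤ 1) (hx : 0 ≤ x) :
    x ^ (1 - q) * x ^ q = x := by
  rw [← Real.rpow_add_of_nonneg hx (sub_nonneg.mpr hq1) hq0, sub_add_cancel, Real.rpow_one]

theorem mul_rpow_one_sub {x y q : ℝ} (hx : 0 ≤ x) (hy : 0 < y) :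
    (x * y) ^ (1 - q) = y ^ (-q) * x ^ (1 - q) * y := by
  rw [Real.mul_rpow hx hy.le, sub_eq_neg_add, Real.rpow_add hy, Real.rpow_one]
  ring

variable {ι : Type*} [Fintype ι] {q s t : ℝ} {w : ι → ℝ}

/-- The indices at which `w` is at least `t` in absolute value: the effective support of a weakly
sparse vector `w` at threshold `t`. -/
noncomputable def effectiveSupport (w : ι → ℝ) (t : ℝ) : Finset ι := {i | t ≤ |w i|}

theorem card_effectiveSupport_mul_le (hq0 : 0 ≤ q) (hq1 : q ≤ 1) (ht : 0 ≤ t)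
    (hw : ∑ i, |w i| ^ q ≤ s) :
    ((effectiveSupport w t).card : ℝ) * t ≤ t ^ (1 - q) * s := by
  have hcard : ((effectiveSupport w t).card : ℝ) * t ^ q ≤ s := by
    rw [← nsmul_eq_mul]
    refine (Finset.card_nsmul_le_sum _ (fun i => |w i| ^ q) _ fun i hi => ?_).trans
      ((Finset.sum_le_univ_sum_of_nonneg fun i => by positivity).trans hw)
    exact Real.rpow_le_rpow ht (Finset.mem_filter.mp hi).2 hq0
  calc ((effectiveSupport w t).card : ℝ) * t
      = t ^ (1 - q) * ((effectiveSupport w t).card * t ^ q) := by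
        rw [mul_left_comm, rpow_one_sub_mul_rpow_self hq0 hq1 ht]
    _ ≤ t ^ (1 - q) * s := by gcongr

theorem sum_compl_effectiveSupport_le [DecidableEq ι] (hq0 : 0 ≤ q) (hq1 : q ≤ 1) (ht : 0 ≤ t)
    (hw : ∑ i, |w i| ^ q ≤ s) :
    ∑ i ∈ (effectiveSupport w t)ᶜ, |w i| ≤ t ^ (1 - q) * s := by
  have hsmall {i : ι} (hi : i ∈ (effectiveSupport w t)ᶜ) : |w i| ≤ t := by
    simp only [effectiveSupport, Finset.compl_filter, Finset.mem_filter, not_le] at hi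
    exact hi.2.le
  calc ∑ i ∈ (effectiveSupport w t)ᶜ, |w i|
      ≤ ∑ i ∈ (effectiveSupport w t)ᶜ, t ^ (1 - q) * |w i| ^ q := by
        refine Finset.sum_le_sum fun i hi => ?_
        calc |w i| = |w i| ^ (1 - q) * |w i| ^ q :=
              (rpow_one_sub_mul_rpow_self hq0 hq1 (abs_nonneg _)).symm
          _ ≤ t ^ (1 - q) * |w i| ^ q := by
              gcongr
              exact hsmall hi
    _ ≤ ∑ i, t ^ (1 - q) * |w i| ^ q := Finset.sum_le_univ_sum_of_nonneg fun i => by positivity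
    _ = t ^ (1 - q) * ∑ i, |w i| ^ q := (Finset.mul_sum _ _ _).symm
    _ ≤ t ^ (1 - q) * s := by gcongr

end Threshold

theorem sum_abs_add_sum_compl_abs_eq_vecL1 {p : ℕ} (J : Finset (Fin p)) (v : Fin p → ℝ) :
    ∑ i ∈ J, |v i| + ∑ i ∈ Jᶜ, |v i| = vecL1 v :=
  Finset.sum_add_sum_compl J _

theorem vecL1_sub_le_add_two_mul {p : ℕ} (J : Finset (Fin p)) (b w : Fin p → ℝ) :
    vecL1 (b - w) ≤
      vecL1 b - vecL1 w + 2 * (∑ i ∈ J, |(b - w) i| + ∑ i ∈ Jᶜ, |w i|) := by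
  have hJ : ∑ i ∈ J, |w i| ≤ ∑ i ∈ J, |b i| + ∑ i ∈ J, |(b - w) i| := by
    rw [← Finset.sum_add_distrib]
    refine Finset.sum_le_sum fun i _ => ?_
    rw [Pi.sub_apply, abs_sub_comm]
    linarith [abs_sub_abs_le_abs_sub (w i) (b i)]
  have hJc : ∑ i ∈ Jᶜ, |(b - w) i| ≤ ∑ i ∈ Jᶜ, |b i| + ∑ i ∈ Jᶜ, |w i| := by
    rw [← Finset.sum_add_distrib]
    exact Finset.sum_le_sum fun i _ => abs_sub (b i) (w i)
  simp only [← sum_abs_add_sum_compl_abs_eq_vecL1 J]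
  linarith

section Column

variable {p : ℕ} {Ω S : Matrix (Fin p) (Fin p) ℝ} {lam q s : ℝ} {b : Fin p → ℝ} {j : Fin p}

theorem abs_mulVec_col_sub_single_le (hΩ : IsUnit Ω) (S : Matrix (Fin p) (Fin p) ℝ)
    (j k : Fin p) :
    |(S *ᵥ Ω.col j - Pi.single j 1 : Fin p → ℝ) k| ≤ matLinf (S - Ω⁻¹) * matL1 Ω := by
  have hcol : Ω⁻¹ *ᵥ Ω.col j = Pi.single j 1 := by
    rw [← mulVec_single_one, mulVec_mulVec,
      nonsing_inv_mul _ ((isUnit_iff_isUnit_det Ω).mp hΩ), one_mulVec]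
  calc |(S *ᵥ Ω.col j - Pi.single j 1 : Fin p → ℝ) k| = |((S - Ω⁻¹) *ᵥ Ω.col j) k| := by
        rw [sub_mulVec, hcol]
    _ ≤ matLinf (S - Ω⁻¹) * vecL1 (Ω.col j) := abs_mulVec_le_matLinf_mul_vecL1 _ _ k
    _ ≤ matLinf (S - Ω⁻¹) * matL1 Ω := by
        gcongr
        · exact matLinf_nonneg _
        · exact vecL1_col_le_matL1 Ω j

theorem abs_le_matL1_mul_of_abs_mulVec_le (hΩsym : Ω.IsSymm) (hΩ : IsUnit Ω) {h : Fin p → ℝ}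
    {c : ℝ} (hc : ∀ i, |(S *ᵥ h) i| ≤ c) (k : Fin p) :
    |h k| ≤ matL1 Ω * (c + matLinf (S - Ω⁻¹) * vecL1 h) := by
  have hinv : Ω *ᵥ (Ω⁻¹ *ᵥ h) = h := by
    rw [mulVec_mulVec, mul_nonsing_inv _ ((isUnit_iff_isUnit_det Ω).mp hΩ), one_mulVec]
  have hbound (i : Fin p) : |(Ω⁻¹ *ᵥ h) i| ≤ c + matLinf (S - Ω⁻¹) * vecL1 h := by
    calc |(Ω⁻¹ *ᵥ h) i| = |(S *ᵥ h) i - ((S - Ω⁻¹) *ᵥ h) i| := by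
          rw [sub_mulVec, Pi.sub_apply, sub_sub_cancel]
      _ ≤ |(S *ᵥ h) i| + |((S - Ω⁻¹) *ᵥ h) i| := abs_sub _ _
      _ ≤ c + matLinf (S - Ω⁻¹) * vecL1 h :=
          add_le_add (hc i) (abs_mulVec_le_matLinf_mul_vecL1 _ h i)
  calc |h k| = |(Ω *ᵥ (Ω⁻¹ *ᵥ h)) k| := by rw [hinv]
    _ ≤ matL1 Ω * (c + matLinf (S - Ω⁻¹) * vecL1 h) :=
        abs_mulVec_le_matL1_mul_of_isSymm hΩsym hbound k

theorem IsScioEstimator.abs_sub_col_le (hb : IsScioEstimator S (Pi.single j 1) lam b)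
    (hΩsym : Ω.IsSymm) (hΩ : IsUnit Ω) (hS : S.IsSymm) (hlam : 0 ≤ lam)
    (hlamS : 3 * matL1 Ω * matLinf (S - Ω⁻¹) ≤ lam) (k : Fin p) :
    |(b - Ω.col j) k| ≤ 4 / 3 * (lam * matL1 Ω) + lam / 3 * vecL1 (b - Ω.col j) := by
  have hgrad (i : Fin p) : |(S *ᵥ (b - Ω.col j)) i| ≤ 4 / 3 * lam := by
    have hest := hb.abs_gradient_le hS hlam i
    have htrue := abs_mulVec_col_sub_single_le hΩ S j i
    have hsplit : S *ᵥ (b - Ω.col j) =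
        (S *ᵥ b - Pi.single j 1) - (S *ᵥ Ω.col j - Pi.single j 1) := by
      rw [mulVec_sub]; abel
    rw [hsplit]
    refine (abs_sub _ _).trans ?_
    linarith
  have hentry := abs_le_matL1_mul_of_abs_mulVec_le hΩsym hΩ hgrad k
  have hnoise := mul_le_mul_of_nonneg_right hlamS (vecL1_nonneg (b - Ω.col j))
  linarith

theorem IsScioEstimator.vecL1_sub_vecL1_col_le (hb : IsScioEstimator S (Pi.single j 1) lam b)
    (hΩsym : Ω.IsSymm) (hΩ : IsUnit Ω) (hS : S.IsSymm) (hlam : 0 ≤ lam)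
    (hlamS : 3 * matL1 Ω * matLinf (S - Ω⁻¹) ≤ lam) :
    vecL1 b - vecL1 (Ω.col j) ≤ vecL1 (b - Ω.col j) / 3 := by
  rcases hlam.eq_or_lt with rfl | hpos
  · have hzero : b - Ω.col j = 0 := funext fun k => by
      simpa using hb.abs_sub_col_le hΩsym hΩ hS le_rfl hlamS k
    rw [hzero, sub_eq_zero.mp hzero, sub_self]
    exact div_nonneg (vecL1_nonneg _) zero_le_three
  · have hcol (k : Fin p) : |(S *ᵥ Ω.col j - Pi.single j 1 : Fin p → ℝ) k| ≤ lam / 3 := by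
      linarith [abs_mulVec_col_sub_single_le hΩ S j k]
    refine le_of_mul_le_mul_left ?_ hpos
    linarith [hb.mul_vecL1_sub_vecL1_le hS hlam hcol]

theorem IsScioEstimator.vecL1_sub_col_le (hb : IsScioEstimator S (Pi.single j 1) lam b)
    (hq0 : 0 ≤ q) (hq1 : q ≤ 1) (hΩsym : Ω.IsSymm) (hΩ : IsUnit Ω)
    (hΩs : ∑ i, |Ω i j| ^ q ≤ s) (hS : S.IsSymm) (hlam : 0 ≤ lam)
    (hlamS : 3 * matL1 Ω * matLinf (S - Ω⁻¹) ≤ lam)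
    (hsparse : (lam * matL1 Ω) ^ (1 - q) * s ≤ matL1 Ω / 2) :
    vecL1 (b - Ω.col j) ≤ 14 * ((lam * matL1 Ω) ^ (1 - q) * s) := by
  have : Nonempty (Fin p) := ⟨j⟩
  have hL : 0 < matL1 Ω := matL1_pos hΩ.ne_zero
  have ht : 0 ≤ lam * matL1 Ω := mul_nonneg hlam hL.le
  set J := effectiveSupport (Ω.col j) (lam * matL1 Ω)
  have hcard : J.card * (lam * matL1 Ω) ≤ (lam * matL1 Ω) ^ (1 - q) * s :=
    card_effectiveSupport_mul_le hq0 hq1 ht hΩs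
  have htail : ∑ i ∈ Jᶜ, |Ω.col j i| ≤ (lam * matL1 Ω) ^ (1 - q) * s :=
    sum_compl_effectiveSupport_le hq0 hq1 ht hΩs
  have hcard_lam : J.card * lam ≤ 1 / 2 := le_of_mul_le_mul_right (by linarith) hL
  have hJ : ∑ i ∈ J, |(b - Ω.col j) i| ≤
      4 / 3 * ((lam * matL1 Ω) ^ (1 - q) * s) + vecL1 (b - Ω.col j) / 6 := by
    calc ∑ i ∈ J, |(b - Ω.col j) i|
        ≤ J.card • (4 / 3 * (lam * matL1 Ω) + lam / 3 * vecL1 (b - Ω.col j)) :=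
          Finset.sum_le_card_nsmul _ _ _ fun i _ =>
            hb.abs_sub_col_le hΩsym hΩ hS hlam hlamS i
      _ ≤ 4 / 3 * ((lam * matL1 Ω) ^ (1 - q) * s) + vecL1 (b - Ω.col j) / 6 := by
          rw [nsmul_eq_mul]
          linarith [mul_le_mul_of_nonneg_right hcard_lam (vecL1_nonneg (b - Ω.col j))]
  linarith [vecL1_sub_le_add_two_mul J b (Ω.col j),
    hb.vecL1_sub_vecL1_col_le hΩsym hΩ hS hlam hlamS]

theorem IsScioEstimator.abs_sub_col_le_of_sparse
    (hb : IsScioEstimator S (Pi.single j 1) lam b)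
    (hq0 : 0 ≤ q) (hq1 : q ≤ 1) (hΩsym : Ω.IsSymm) (hΩ : IsUnit Ω)
    (hΩs : ∑ i, |Ω i j| ^ q ≤ s) (hS : S.IsSymm) (hlam : 0 ≤ lam)
    (hlamS : 3 * matL1 Ω * matLinf (S - Ω⁻¹) ≤ lam)
    (hsparse : (lam * matL1 Ω) ^ (1 - q) * s ≤ matL1 Ω / 2) (k : Fin p) :
    |(b - Ω.col j) k| ≤ 11 / 3 * (lam * matL1 Ω) := by
  have hcol : vecL1 (b - Ω.col j) ≤ 7 * matL1 Ω := by
    linarith [hb.vecL1_sub_col_le hq0 hq1 hΩsym hΩ hΩs hS hlam hlamS hsparse]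
  linarith [hb.abs_sub_col_le hΩsym hΩ hS hlam hlamS k, mul_le_mul_of_nonneg_left hcol hlam]

end Column

section Symmetrize

variable {p : ℕ} {A B : Matrix (Fin p) (Fin p) ℝ} {c : ℝ}

theorem abs_symmetrize_le (A : Matrix (Fin p) (Fin p) ℝ) (i j : Fin p) :
    |symmetrize A i j| ≤ |A i j| := by
  unfold symmetrize
  split_ifs with h
  · exact le_rfl
  · exact (not_le.mp h).le

theorem abs_symmetrize_sub_le (hB : B.IsSymm) (h : ∀ i j, |A i j - B i j| ≤ c) (i j : Fin p) :
    |symmetrize A i j - B i j| ≤ c := by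
  unfold symmetrize
  split_ifs
  · exact h i j
  · rw [← hB.apply i j]; exact h j i

theorem vecL1_symmetrize_sub_col_le (hB : B.IsSymm) (h : ∀ i j, |A i j - B i j| ≤ c)
    (J : Finset (Fin p)) (j : Fin p) :
    vecL1 ((symmetrize A - B).col j) ≤
      J.card * c + vecL1 (A.col j - B.col j) + 2 * ∑ i ∈ Jᶜ, |B i j| := by
  have hJ : ∑ i ∈ J, |symmetrize A i j - B i j| ≤ J.card * c := by
    rw [← nsmul_eq_mul]
    exact Finset.sum_le_card_nsmul _ _ _ fun i _ => abs_symmetrize_sub_le hB h i j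
  have hJc : ∑ i ∈ Jᶜ, |symmetrize A i j - B i j| ≤
      vecL1 (A.col j - B.col j) + 2 * ∑ i ∈ Jᶜ, |B i j| := by
    calc ∑ i ∈ Jᶜ, |symmetrize A i j - B i j|
        ≤ ∑ i ∈ Jᶜ, (|A i j - B i j| + 2 * |B i j|) := by
          refine Finset.sum_le_sum fun i _ => ?_
          linarith [abs_sub (symmetrize A i j) (B i j), abs_symmetrize_le A i j,
            abs_sub_abs_le_abs_sub (A i j) (B i j)]
      _ = ∑ i ∈ Jᶜ, |A i j - B i j| + 2 * ∑ i ∈ Jᶜ, |B i j| := by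
          rw [Finset.sum_add_distrib, Finset.mul_sum]
      _ ≤ vecL1 (A.col j - B.col j) + 2 * ∑ i ∈ Jᶜ, |B i j| := by
          gcongr
          exact Finset.sum_le_univ_sum_of_nonneg (f := fun i => |A i j - B i j|)
            fun i => abs_nonneg _
  calc vecL1 ((symmetrize A - B).col j)
      = ∑ i ∈ J, |symmetrize A i j - B i j| + ∑ i ∈ Jᶜ, |symmetrize A i j - B i j| :=
        (sum_abs_add_sum_compl_abs_eq_vecL1 J _).symm
    _ ≤ J.card * c + vecL1 (A.col j - B.col j) + 2 * ∑ i ∈ Jᶜ, |B i j| := by linarith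

end Symmetrize

theorem scio_matrix_L1_bound_general {p : ℕ} {q s lam : ℝ}
    {Ω Shat Ωhat : Matrix (Fin p) (Fin p) ℝ} (hq0 : 0 ≤ q) (hq1 : q ≤ 1) (hs : 0 ≤ s)
    (hΩsym : Ω.IsSymm) (hΩ : IsUnit Ω) (hΩs : ∀ j, ∑ i, |Ω i j| ^ q ≤ s)
    (hSsym : Shat.IsSymm) (hlamS : 3 * matL1 Ω * matLinf (Shat - Ω⁻¹) ≤ lam)
    (hsparse : matL1 Ω ^ (-q) * lam ^ (1 - q) * s ≤ 1 / 2)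
    (hmin : ∀ j, IsScioEstimator Shat (Pi.single j 1) lam (Ωhat.col j)) :
    matL1 (symmetrize Ωhat - Ω) ≤ 20 * (lam * matL1 Ω) ^ (1 - q) * s := by
  have hlam : 0 ≤ lam :=
    (mul_nonneg (mul_nonneg zero_le_three (matL1_nonneg Ω)) (matLinf_nonneg _)).trans hlamS
  have ht : 0 ≤ lam * matL1 Ω := mul_nonneg hlam (matL1_nonneg Ω)
  refine matL1_le (by positivity) fun j => ?_
  have : Nonempty (Fin p) := ⟨j⟩
  have hL : 0 < matL1 Ω := matL1_pos hΩ.ne_zero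
  have hrate : (lam * matL1 Ω) ^ (1 - q) * s ≤ matL1 Ω / 2 := by
    rw [mul_rpow_one_sub hlam hL]
    linarith [mul_le_mul_of_nonneg_right hsparse hL.le]
  have hentry (i k : Fin p) : |Ωhat i k - Ω i k| ≤ 11 / 3 * (lam * matL1 Ω) :=
    (hmin k).abs_sub_col_le_of_sparse hq0 hq1 hΩsym hΩ (hΩs k) hSsym hlam hlamS hrate i
  set J := effectiveSupport (Ω.col j) (lam * matL1 Ω)
  have hcard : J.card * (lam * matL1 Ω) ≤ (lam * matL1 Ω) ^ (1 - q) * s :=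
    card_effectiveSupport_mul_le hq0 hq1 ht (hΩs j)
  have htail : ∑ i ∈ Jᶜ, |Ω i j| ≤ (lam * matL1 Ω) ^ (1 - q) * s :=
    sum_compl_effectiveSupport_le hq0 hq1 ht (hΩs j)
  have hrate_nonneg : 0 ≤ (lam * matL1 Ω) ^ (1 - q) * s := by positivity
  linarith [vecL1_symmetrize_sub_col_le hΩsym hentry J j,
    (hmin j).vecL1_sub_col_le hq0 hq1 hΩsym hΩ (hΩs j) hSsym hlam hlamS hrate]

/-- Theorem 2, matrix L1-norm bound: the symmetrized SCIO estimator Ω̃ satisfies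
‖Ω̃ − Ω‖_{L1} ≤ 66 (λ ‖Ω‖_{L1})^{1−q} s_p. -/
theorem scio_matrix_L1_bound {p : ℕ} (q s M : ℝ) (hq0 : 0 ≤ q) (hq1 : q < 1)
    (hs : 0 < s) (hM : 0 < M)
    (Ω : Matrix (Fin p) (Fin p) ℝ) (hΩsym : Ω.IsSymm) (hΩpd : Ω.PosDef)
    (hΩs : ∀ j, ∑ i, |Ω i j| ^ q ≤ s) (hΩM : matL1 Ω ≤ M)
    (Shat : Matrix (Fin p) (Fin p) ℝ) (hSsym : Shat.IsSymm)
    (lam : ℝ) (hlam0 : 0 ≤ lam)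
    (hlam1 : 3 * matL1 Ω * matLinf (Shat - Ω⁻¹) ≤ lam)
    (hlam2 : (matL1 Ω) ^ (-q) * lam ^ (1 - q) * s ≤ 1 / 2)
    (Ωhat : Matrix (Fin p) (Fin p) ℝ)
    (hmin : ∀ (i : Fin p) (β : Fin p → ℝ),
      scioObj Shat (Pi.single i 1) lam (fun k => Ωhat k i) ≤
        scioObj Shat (Pi.single i 1) lam β) :
    matL1 (symmetrize Ωhat - Ω) ≤ 66 * (lam * matL1 Ω) ^ (1 - q) * s := by
  refine (scio_matrix_L1_bound_general hq0 hq1.le hs.le hΩsym hΩpd.isUnit hΩs hSsym hlam1 hlam2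
    hmin).trans ?_
  have hL : 0 ≤ matL1 Ω := matL1_nonneg Ω
  gcongr
  norm_num
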